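/- arXiv:0901.0342 — 9 statements merged into one kernel-verified Lean document; each statement's English description precedes it below -/
import Mathlib

section
/- Let r ≥ 1 and let (m₁, m₂) be a commuting pair of r×r complex matrices. The GL_r(ℂ)-orbit {(g m₁ g⁻¹, g m₂ g⁻¹) : g ∈ GL_r(ℂ)} is a closed subset of M_r(ℂ) × M_r(ℂ) if and only if m₁ and m₂ are simultaneously diagonalizable, i.e. there exists g ∈ GL_r(ℂ) such that g m₁ g⁻¹ and g m₂ g⁻¹ are both diagonal matrices. -/
open Matrix

/-- The orbit of a pair of `r × r` complex matrices under the simultaneous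
conjugation action of `GL r ℂ`. -/
def conjOrbit (r : ℕ) (m₁ m₂ : Matrix (Fin r) (Fin r) ℂ) :
    Set (Matrix (Fin r) (Fin r) ℂ × Matrix (Fin r) (Fin r) ℂ) :=
  {p | ∃ g : GL (Fin r) ℂ, p = (g.val * m₁ * g⁻¹.val, g.val * m₂ * g⁻¹.val)}

/-! A commuting pair is simultaneously triangular in a suitable basis. Conjugating a triangular pair
by `diag(s ^ (-w i))`, with weights `w` increasing along the flag, and letting `s → 0` degenerates
it to its diagonal part; if the orbit is closed, this diagonal pair lies in it.

Conversely, for all but finitely many `t` the combination `c = a + t • b` of two diagonal matrices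
separates the joint eigenvalues of `(a, b)`, so that `a = p(c)` and `b = q(c)` for polynomials `p`
and `q`. The orbit of `(a, b)` is then the set of pairs `(A, B)` with `A = p(C)` and `B = q(C)`,
where `C = A + t • B` lies in the orbit of `c`. That orbit is closed: it consists of the matrices
with the characteristic polynomial of `c` that are annihilated by the product of the `X - x` over
the distinct eigenvalues `x` of `c`, the latter condition forcing diagonalizability. -/

open Module MulAction Polynomial Topology

section CommonFlag

variable {K V : Type*} [Field K] [AddCommGroup V] [Module K V]

theorem exists_basis_flag_castSucc_eq_map {φ : Dual K V} (hφ : φ ≠ 0) {n : ℕ}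
    (b : Basis (Fin n) K (LinearMap.ker φ)) :
    ∃ B : Basis (Fin (n + 1)) K V,
      ∀ k, B.flag k.castSucc = (b.flag k).map (LinearMap.ker φ).subtype := by
  obtain ⟨y, hy⟩ : ∃ y, φ y ≠ 0 := DFunLike.ne_iff.1 hφ
  have hli (c : K) (x : V) (hx : x ∈ LinearMap.ker φ) (h : c • y + x = 0) : c = 0 := by
    have hφc := congrArg φ h
    rw [map_add, map_smul, LinearMap.mem_ker.1 hx, map_zero, add_zero, smul_eq_mul] at hφc
    exact (mul_eq_zero.1 hφc).resolve_right hy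
  have hsp (z : V) : ∃ c : K, z + c • y ∈ LinearMap.ker φ :=
    ⟨-(φ z / φ y), by simp [hy]⟩
  refine ⟨.mkFinSnoc b y hli hsp, fun k => le_antisymm ?_ ?_⟩
  · refine (Basis.flag_le_iff _).2 (Fin.lastCases (fun h => ?_) fun i h => ?_)
    · exact absurd h (Fin.castSucc_le_castSucc_iff.2 (Fin.le_last k)).not_gt
    · rw [Basis.coe_mkFinSnoc, Fin.snoc_castSucc]
      exact Submodule.mem_map_of_mem (b.self_mem_flag (Fin.castSucc_lt_castSucc_iff.1 h))
  · refine Submodule.map_le_iff_le_comap.2 ((Basis.flag_le_iff _).2 fun i h => ?_)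
    have hi : Basis.mkFinSnoc b y hli hsp i.castSucc = b i := by
      rw [Basis.coe_mkFinSnoc, Fin.snoc_castSucc]; rfl
    rw [Submodule.mem_comap, Submodule.subtype_apply, ← hi]
    exact Basis.self_mem_flag _ (Fin.castSucc_lt_castSucc_iff.2 h)

theorem isUpperTriangular_toMatrix_of_flag_mem_invtSubmodule {n : ℕ} (b : Basis (Fin n) K V)
    {f : End K V} (h : ∀ k, b.flag k ∈ f.invtSubmodule) :
    (LinearMap.toMatrix b b f).IsUpperTriangular := by
  intro i j hji
  rw [LinearMap.toMatrix_apply]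
  exact b.flag_le_ker_coord (Fin.succ_le_castSucc_iff.2 hji)
    (h j.succ (b.self_mem_flag j.castSucc_lt_succ))

variable [IsAlgClosed K] [FiniteDimensional K V] {f g : End K V}

theorem exists_common_hasEigenvector_of_commute [Nontrivial V] (h : Commute f g) :
    ∃ (a b : K) (v : V), f.HasEigenvector a v ∧ g.HasEigenvector b v := by
  obtain ⟨a, ha⟩ := End.exists_eigenvalue f
  have hg : Set.MapsTo g (f.eigenspace a) (f.eigenspace a) :=
    End.mapsTo_genEigenspace_of_comm h a 1
  have : Nontrivial (f.eigenspace a) := (Submodule.nontrivial_iff_ne_bot).2 ha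
  obtain ⟨b, hb⟩ := End.exists_eigenvalue (g.restrict hg)
  obtain ⟨v, hv⟩ := hb.exists_hasEigenvector
  have hv₀ : (v : V) ≠ 0 := fun h₀ => hv.2 (Subtype.ext h₀)
  exact ⟨a, b, v, ⟨v.2, hv₀⟩,
    End.mem_eigenspace_iff.2 (congrArg Subtype.val hv.apply_eq_smul), hv₀⟩

-- A common eigenvector of the transposes is a linear form with invariant kernel.
theorem exists_ker_mem_invtSubmodule_of_commute [Nontrivial V] (h : Commute f g) :
    ∃ φ : Dual K V, φ ≠ 0 ∧
      LinearMap.ker φ ∈ f.invtSubmodule ∧ LinearMap.ker φ ∈ g.invtSubmodule := by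
  have hdual : Commute (show End K (Dual K V) from f.dualMap) g.dualMap := by
    ext φ v
    exact congrArg φ (LinearMap.congr_fun h.eq.symm v)
  obtain ⟨a, b, φ, hf, hg⟩ := exists_common_hasEigenvector_of_commute hdual
  have ker_mem {u : End K V} {c : K} (hu : u.dualMap φ = c • φ) :
      LinearMap.ker φ ∈ u.invtSubmodule := fun v hv => by
    have := LinearMap.congr_fun hu v
    rw [LinearMap.mem_ker] at hv
    simpa [hv] using this
  exact ⟨φ, hf.2, ker_mem hf.apply_eq_smul, ker_mem hg.apply_eq_smul⟩

theorem exists_basis_flag_mem_invtSubmodule_of_commute (h : Commute f g) {n : ℕ}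
    (hn : finrank K V = n) :
    ∃ b : Basis (Fin n) K V, ∀ k, b.flag k ∈ f.invtSubmodule ∧ b.flag k ∈ g.invtSubmodule := by
  induction n generalizing V with
  | zero =>
    refine ⟨finBasisOfFinrankEq K V hn, fun k => ?_⟩
    rw [Fin.fin_one_eq_zero k, Basis.flag_zero]
    exact ⟨End.invtSubmodule.bot_mem f, End.invtSubmodule.bot_mem g⟩
  | succ n ih =>
    have : Nontrivial V := nontrivial_of_finrank_pos (R := K) (by lia)
    obtain ⟨φ, hφ, hf, hg⟩ := exists_ker_mem_invtSubmodule_of_commute h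
    have hker : finrank K (LinearMap.ker φ) = n := by
      have := Dual.finrank_ker_add_one_of_ne_zero hφ
      lia
    obtain ⟨b, hb⟩ := ih (LinearMap.restrict_commute h hf hg) hker
    obtain ⟨B, hB⟩ := exists_basis_flag_castSucc_eq_map hφ b
    refine ⟨B, Fin.lastCases ?_ fun k => ?_⟩
    · rw [Basis.flag_last]
      exact ⟨End.invtSubmodule.top_mem f, End.invtSubmodule.top_mem g⟩
    · rw [hB]
      exact ⟨End.invtSubmodule.map_subtype_mem_of_mem_invtSubmodule f hf (hb k).1,
        End.invtSubmodule.map_subtype_mem_of_mem_invtSubmodule g hg (hb k).2⟩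

end CommonFlag

section ChangeOfBasis

variable {R M n : Type*} [CommRing R] [AddCommGroup M] [Module R M] [Fintype n] [DecidableEq n]

theorem exists_conjAct_smul_toMatrix_eq (b b' : Basis n R M) :
    ∃ g : ConjAct (GL n R), ∀ f : End R M,
      g • LinearMap.toMatrix b b f = LinearMap.toMatrix b' b' f :=
  ⟨ConjAct.toConjAct ⟨b'.toMatrix b, b.toMatrix b', b'.toMatrix_mul_toMatrix_flip b,
    b.toMatrix_mul_toMatrix_flip b'⟩,
    fun f => basis_toMatrix_mul_linearMap_toMatrix_mul_basis_toMatrix b' b b' b f⟩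

theorem exists_conjAct_smul_eq_toMatrix (b : Basis n R (n → R)) :
    ∃ g : ConjAct (GL n R), ∀ A : Matrix n n R, g • A = LinearMap.toMatrix b b A.toLin' := by
  obtain ⟨g, hg⟩ := exists_conjAct_smul_toMatrix_eq (Pi.basisFun R n) b
  refine ⟨g, fun A => ?_⟩
  rw [← hg, LinearMap.toMatrix_eq_toMatrix', LinearMap.toMatrix'_toLin']

end ChangeOfBasis

section Triangularization

variable {K n : Type*} [Field K] [IsAlgClosed K] [Fintype n] [DecidableEq n]

theorem exists_smul_blockTriangular_of_commute {A B : Matrix n n K} (h : Commute A B) :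
    ∃ (g : ConjAct (GL n K)) (w : n → ℕ), w.Injective ∧
      (g • A).BlockTriangular w ∧ (g • B).BlockTriangular w := by
  have hlin : Commute (show End K (n → K) from A.toLin') B.toLin' :=
    h.map (Matrix.toLinAlgEquiv' (R := K) (n := n))
  obtain ⟨b, hb⟩ :=
    exists_basis_flag_mem_invtSubmodule_of_commute hlin (finrank_fintype_fun_eq_card K)
  let e := Fintype.equivFin n
  obtain ⟨g, hg⟩ := exists_conjAct_smul_eq_toMatrix (b.reindex e.symm)
  have triangular {f : End K (n → K)} (hf : ∀ k, b.flag k ∈ f.invtSubmodule) :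
      (LinearMap.toMatrix (b.reindex e.symm) (b.reindex e.symm) f).BlockTriangular
        fun i => (e i : ℕ) := by
    intro i j hji
    have := isUpperTriangular_toMatrix_of_flag_mem_invtSubmodule b hf (show e j < e i from hji)
    rw [LinearMap.toMatrix_apply] at this ⊢
    simpa using this
  refine ⟨g, fun i => e i, Fin.val_injective.comp e.injective, ?_, ?_⟩
  · exact hg A ▸ triangular fun k => (hb k).1
  · exact hg B ▸ triangular fun k => (hb k).2

end Triangularization

section Degeneration

variable {K n : Type*}

/-- The degeneration of a matrix `M` along the one-parameter subgroup `s ↦ diag(s ^ (-w i))` with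
weights `w`: for `s ≠ 0` and `M` block triangular with respect to `w` this is a conjugate of `M`.
The exponent is the truncated difference `w j - w i`, so that the formula also makes sense at
`s = 0`; truncation occurs only at entries where such an `M` vanishes. -/
def degeneration [Semiring K] (w : n → ℕ) (M : Matrix n n K) (s : K) : Matrix n n K :=
  of fun i j => s ^ (w j - w i) * M i j

theorem degeneration_zero [Semiring K] [DecidableEq n] {w : n → ℕ} (hw : w.Injective)
    {M : Matrix n n K} (hM : M.BlockTriangular w) : degeneration w M 0 = diagonal M.diag := by
  ext i j
  rw [degeneration, of_apply]
  obtain hij | hij | hij := lt_trichotomy (w i) (w j)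
  · rw [zero_pow (Nat.sub_ne_zero_of_lt hij), zero_mul,
      diagonal_apply_ne _ (fun h => hij.ne (congrArg w h))]
  · rw [hw hij, Nat.sub_self, pow_zero, one_mul, diagonal_apply_eq, diag_apply]
  · rw [hM hij, mul_zero, diagonal_apply_ne _ (fun h => hij.ne' (congrArg w h))]

theorem continuous_degeneration [Semiring K] [TopologicalSpace K] [ContinuousMul K]
    (w : n → ℕ) (M : Matrix n n K) : Continuous (degeneration w M) :=
  continuous_matrix fun i j => (continuous_pow (w j - w i)).mul continuous_const

theorem exists_smul_eq_degeneration [Field K] [Fintype n] [DecidableEq n] (w : n → ℕ) {s : K}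
    (hs : s ≠ 0) :
    ∃ g : ConjAct (GL n K), ∀ M : Matrix n n K, M.BlockTriangular w →
      g • M = degeneration w M s := by
  let D : GL n K := ⟨diagonal fun i => (s ^ w i)⁻¹, diagonal fun i => s ^ w i,
    by simp [hs], by simp [hs]⟩
  refine ⟨ConjAct.toConjAct D, fun M hM => ?_⟩
  ext i j
  have hconj : (ConjAct.toConjAct D • M) i j = (s ^ w i)⁻¹ * M i j * s ^ w j := by
    change (diagonal (fun i => (s ^ w i)⁻¹) * M * diagonal fun i => s ^ w i) i j = _
    rw [mul_diagonal, diagonal_mul]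
  rw [hconj, degeneration, of_apply]
  obtain hij | hij := lt_or_ge (w j) (w i)
  · rw [hM hij, mul_zero, mul_zero, zero_mul]
  · rw [pow_sub₀ s hs hij]
    ring

variable [Field K] [TopologicalSpace K] [ContinuousMul K] [(𝓝[≠] (0 : K)).NeBot]
  [Fintype n] [DecidableEq n]

theorem diagonal_diag_mem_closure_orbit {w : n → ℕ} (hw : w.Injective) {A B : Matrix n n K}
    (hA : A.BlockTriangular w) (hB : B.BlockTriangular w) :
    (diagonal A.diag, diagonal B.diag) ∈ closure (orbit (ConjAct (GL n K)) (A, B)) := by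
  have hlim : Filter.Tendsto (fun s => (degeneration w A s, degeneration w B s)) (𝓝[≠] 0)
      (𝓝 (diagonal A.diag, diagonal B.diag)) := by
    rw [← degeneration_zero hw hA, ← degeneration_zero hw hB]
    exact (((continuous_degeneration w A).prodMk (continuous_degeneration w B)).tendsto 0).mono_left
      nhdsWithin_le_nhds
  refine mem_closure_of_tendsto hlim (eventually_nhdsWithin_of_forall fun s hs => ?_)
  obtain ⟨g, hg⟩ := exists_smul_eq_degeneration w hs
  exact ⟨g, Prod.ext (hg A hA) (hg B hB)⟩

theorem exists_smul_isDiag_of_isClosed_orbit [IsAlgClosed K] {A B : Matrix n n K}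
    (h : Commute A B) (hcl : IsClosed (orbit (ConjAct (GL n K)) (A, B))) :
    ∃ g : ConjAct (GL n K), (g • A).IsDiag ∧ (g • B).IsDiag := by
  obtain ⟨g, w, hw, hA, hB⟩ := exists_smul_blockTriangular_of_commute h
  have hmem := diagonal_diag_mem_closure_orbit hw hA hB
  rw [← Prod.smul_mk, orbit_smul, hcl.closure_eq] at hmem
  obtain ⟨k, hk⟩ := hmem
  have hkA : k • A = diagonal (g • A).diag := congrArg Prod.fst hk
  have hkB : k • B = diagonal (g • B).diag := congrArg Prod.snd hk
  exact ⟨k, hkA ▸ isDiag_diagonal _, hkB ▸ isDiag_diagonal _⟩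

end Degeneration

section PolynomialInGenerator

theorem isClosed_orbit_prod_of_aeval_eq {G K A : Type*} [Group G] [CommSemiring K] [Semiring A]
    [Algebra K A] [MulSemiringAction G A] [SMulCommClass G K A] [TopologicalSpace A] [T2Space A]
    [IsTopologicalSemiring A] [ContinuousConstSMul K A] {x y : A} {t : K} {p q : K[X]}
    (hp : aeval (x + t • y) p = x) (hq : aeval (x + t • y) q = y)
    (hcl : IsClosed (orbit G (x + t • y))) : IsClosed (orbit G (x, y)) := by
  let L (P : A × A) : A := P.1 + t • P.2
  have hL : Continuous L := by fun_prop
  have horbit : orbit G (x, y) =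
      L ⁻¹' orbit G (x + t • y) ∩ {P | (aeval (L P) p, aeval (L P) q) = P} := by
    ext P
    constructor
    · rintro ⟨g, rfl⟩
      have hg : L (g • (x, y)) = g • (x + t • y) := by
        simp only [L, Prod.smul_fst, Prod.smul_snd, smul_add, smul_comm g t]
      refine ⟨⟨g, hg.symm⟩, ?_⟩
      change (aeval (L (g • (x, y))) p, aeval (L (g • (x, y))) q) = g • (x, y)
      rw [hg, aeval_smul, aeval_smul, hp, hq, Prod.smul_mk]
    · rintro ⟨⟨g, hg⟩, hP⟩
      change g • (x + t • y) = L P at hg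
      change (aeval (L P) p, aeval (L P) q) = P at hP
      exact ⟨g, by rw [← hP, ← hg, aeval_smul, aeval_smul, hp, hq]; rfl⟩
  rw [horbit]
  exact (hcl.preimage hL).inter <| isClosed_eq
    ((p.continuous_aeval.comp hL).prodMk (q.continuous_aeval.comp hL)) continuous_id

theorem exists_factorsThrough_add_smul {K ι : Type*} [Field K] [Infinite K] [Finite ι]
    (a b : ι → K) :
    ∃ t : K, a.FactorsThrough (a + t • b) ∧ b.FactorsThrough (a + t • b) := by
  obtain ⟨t, ht⟩ := (Set.finite_range
    fun p : ι × ι => -(a p.1 - a p.2) / (b p.1 - b p.2)).exists_notMem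
  have hb : b.FactorsThrough (a + t • b) := by
    intro i j hij
    by_contra hne
    refine ht ⟨(i, j), (div_eq_iff (sub_ne_zero.2 hne)).2 ?_⟩
    simp only [Pi.add_apply, Pi.smul_apply, smul_eq_mul] at hij
    linear_combination -hij
  refine ⟨t, fun i j hij => ?_, hb⟩
  simpa [hb hij] using hij

variable {K n : Type*} [Fintype n] [DecidableEq n]

theorem aeval_diagonal [CommSemiring K] (c : n → K) (p : K[X]) :
    aeval (diagonal c) p = diagonal fun i => p.eval (c i) := by
  rw [← diagonalAlgHom_apply (R := K), aeval_algHom_apply, diagonalAlgHom_apply]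
  congr 1
  ext i
  rw [aeval_pi_apply₂, coe_aeval_eq_eval]

theorem exists_aeval_diagonal_eq [Field K] {a c : n → K} (h : a.FactorsThrough c) :
    ∃ p : K[X], aeval (diagonal c) p = diagonal a := by
  classical
  refine ⟨Lagrange.interpolate (Finset.univ.image c) id (Function.extend c a 0), ?_⟩
  rw [aeval_diagonal]
  congr 1
  ext i
  have hnode := Lagrange.eval_interpolate_at_node (Function.extend c a 0)
    Function.injective_id.injOn (Finset.mem_image_of_mem c (Finset.mem_univ i))
  rwa [h.extend_apply] at hnode

end PolynomialInGenerator

section DiagonalOrbit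

theorem exists_perm_comp_eq_of_map_univ_eq {ι α : Type*} [Fintype ι] {a b : ι → α}
    (h : Finset.univ.val.map a = Finset.univ.val.map b) : ∃ σ : Equiv.Perm ι, a ∘ σ = b := by
  classical
  have hfiber (x : α) : Nonempty ({i // b i = x} ≃ {i // a i = x}) := by
    refine ⟨Fintype.equivOfCardEq ?_⟩
    have hcount := congrArg (Multiset.count x) h
    rw [Multiset.count_map, Multiset.count_map] at hcount
    simp only [Fintype.card_subtype, eq_comm (b := x)]
    exact hcount.symm
  exact ⟨Equiv.ofFiberEquiv fun x => (hfiber x).some, funext (Equiv.ofFiberEquiv_map _)⟩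

theorem isClosed_setOf_charpoly_eq {K n : Type*} [CommRing K] [IsDomain K] [Infinite K]
    [TopologicalSpace K] [IsTopologicalRing K] [T2Space K] [Fintype n] [DecidableEq n] (p : K[X]) :
    IsClosed {M : Matrix n n K | M.charpoly = p} := by
  have heval : {M : Matrix n n K | M.charpoly = p} =
      ⋂ x, {M | (scalar n x - M).det = p.eval x} := by
    ext M
    simp only [Set.mem_iInter, Set.mem_ofPred_eq, ← eval_charpoly]
    exact ⟨fun h x => h ▸ rfl, Polynomial.funext⟩
  rw [heval]
  exact isClosed_iInter fun x =>
    isClosed_eq (continuous_const.sub continuous_id).matrix_det continuous_const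

variable {K n : Type*} [Field K] [Fintype n] [DecidableEq n]

theorem exists_basis_toMatrix_eq_diagonal {V : Type*} [AddCommGroup V] [Module K V]
    {f : End K V} (hf : ⨆ μ, f.eigenspace μ = ⊤) (b₀ : Basis n K V) :
    ∃ (b : Basis n K V) (d : n → K), LinearMap.toMatrix b b f = diagonal d := by
  let S : Set V := {v | ∃ μ, v ∈ f.eigenspace μ}
  have hS : ⊤ ≤ Submodule.span K S :=
    hf ▸ iSup_le fun μ v hv => Submodule.subset_span ⟨μ, hv⟩
  let b := (Basis.ofSpan hS).reindex ((Basis.ofSpan hS).indexEquiv b₀)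
  have heigen (i : n) : ∃ μ : K, f (b i) = μ • b i := by
    have hbi : b i ∈ S := Basis.ofSpan_subset hS (by simp [b])
    exact hbi.imp fun μ => End.mem_eigenspace_iff.1
  choose d hd using heigen
  refine ⟨b, d, ?_⟩
  ext i j
  rw [LinearMap.toMatrix_apply, hd, map_smul, b.repr_self, Finsupp.smul_apply, smul_eq_mul]
  obtain rfl | hij := eq_or_ne i j
  · rw [Finsupp.single_eq_same, mul_one, diagonal_apply_eq]
  · rw [Finsupp.single_eq_of_ne hij, mul_zero, diagonal_apply_ne _ hij]

theorem diagonal_comp_perm_mem_orbit (d : n → K) (σ : Equiv.Perm n) :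
    diagonal (d ∘ σ) ∈ orbit (ConjAct (GL n K)) (diagonal d) := by
  obtain ⟨g, hg⟩ := exists_conjAct_smul_eq_toMatrix ((Pi.basisFun K n).reindex σ.symm)
  refine ⟨g, (hg _).trans ?_⟩
  ext i j
  obtain rfl | hij := eq_or_ne i j
  · simp [LinearMap.toMatrix_apply]
  · simp [LinearMap.toMatrix_apply, hij]

theorem exists_smul_eq_diagonal [IsAlgClosed K] {M : Matrix n n K} {p : K[X]} (hp : Squarefree p)
    (hM : aeval M p = 0) : ∃ (g : ConjAct (GL n K)) (d : n → K), g • M = diagonal d := by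
  have hss : End.IsSemisimple M.toLin' := by
    refine End.isSemisimple_of_squarefree_aeval_eq_zero hp ?_
    have := aeval_algHom_apply (toLinAlgEquiv' (R := K) (n := n)) M p
    rwa [hM, map_zero] at this
  obtain ⟨b, d, hd⟩ :=
    exists_basis_toMatrix_eq_diagonal hss.iSup_eigenspace_eq_top (Pi.basisFun K n)
  obtain ⟨g, hg⟩ := exists_conjAct_smul_eq_toMatrix b
  exact ⟨g, d, (hg M).trans hd⟩

theorem charpoly_conjAct_smul {R : Type*} [CommRing R] (g : ConjAct (GL n R)) (M : Matrix n n R) :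
    (g • M).charpoly = M.charpoly := by
  rw [ConjAct.units_smul_def, coe_units_inv]
  exact charpoly_units_conj _ M

theorem diagonal_mem_orbit_diagonal_of_charpoly_eq {c d : n → K}
    (h : (diagonal d).charpoly = (diagonal c).charpoly) :
    diagonal d ∈ orbit (ConjAct (GL n K)) (diagonal c) := by
  have hroots (a : n → K) : (diagonal a).charpoly.roots = Finset.univ.val.map a := by
    rw [charpoly_diagonal]
    simpa [Multiset.map_map] using roots_multiset_prod_X_sub_C (Finset.univ.val.map a)
  obtain ⟨σ, rfl⟩ := exists_perm_comp_eq_of_map_univ_eq (a := c) (b := d)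
    (by rw [← hroots, ← hroots, h])
  exact diagonal_comp_perm_mem_orbit c σ

theorem mem_orbit_diagonal_iff [IsAlgClosed K] [DecidableEq K] {c : n → K} {M : Matrix n n K} :
    M ∈ orbit (ConjAct (GL n K)) (diagonal c) ↔
      aeval M (∏ x ∈ Finset.univ.image c, (X - C x)) = 0 ∧
        M.charpoly = (diagonal c).charpoly := by
  constructor
  · rintro ⟨g, rfl⟩
    refine ⟨?_, charpoly_conjAct_smul g _⟩
    have hc (i : n) : (∏ x ∈ Finset.univ.image c, (X - C x)).eval (c i) = 0 := by
      rw [eval_prod]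
      exact Finset.prod_eq_zero (Finset.mem_image_of_mem c (Finset.mem_univ i)) (by simp)
    simp only [aeval_smul, aeval_diagonal, hc, diagonal_zero, smul_zero]
  · rintro ⟨hM, hchar⟩
    have hsq : Squarefree (∏ x ∈ Finset.univ.image c, (X - C x)) :=
      (separable_prod_X_sub_C_iff'.2 fun _ _ _ _ => id).squarefree
    obtain ⟨g, d, hd⟩ := exists_smul_eq_diagonal hsq hM
    have hdc : (diagonal d).charpoly = (diagonal c).charpoly := by
      rw [← hd, charpoly_conjAct_smul, hchar]
    rw [← orbit_eq_iff, ← orbit_smul g M, orbit_eq_iff, hd]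
    exact diagonal_mem_orbit_diagonal_of_charpoly_eq hdc

variable [IsAlgClosed K] [TopologicalSpace K] [IsTopologicalRing K] [T2Space K]

theorem isClosed_orbit_diagonal (c : n → K) :
    IsClosed (orbit (ConjAct (GL n K)) (diagonal c)) := by
  classical
  have horbit : orbit (ConjAct (GL n K)) (diagonal c) =
      {M | aeval M (∏ x ∈ Finset.univ.image c, (X - C x)) = 0} ∩
        {M | M.charpoly = (diagonal c).charpoly} :=
    Set.ext fun _ => mem_orbit_diagonal_iff
  rw [horbit]
  exact (isClosed_eq (Polynomial.continuous_aeval _) continuous_const).inter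
    (isClosed_setOf_charpoly_eq _)

theorem isClosed_orbit_diagonal_prod (a b : n → K) :
    IsClosed (orbit (ConjAct (GL n K)) (diagonal a, diagonal b)) := by
  obtain ⟨t, ha, hb⟩ := exists_factorsThrough_add_smul a b
  obtain ⟨p, hp⟩ := exists_aeval_diagonal_eq ha
  obtain ⟨q, hq⟩ := exists_aeval_diagonal_eq hb
  have hadd : diagonal (a + t • b) = diagonal a + t • diagonal b := by
    rw [← diagonal_smul, diagonal_add]
    rfl
  have hcl := isClosed_orbit_diagonal (a + t • b)
  rw [hadd] at hp hq hcl
  exact isClosed_orbit_prod_of_aeval_eq hp hq hcl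

theorem isClosed_orbit_of_smul_isDiag {A B : Matrix n n K} {g : ConjAct (GL n K)}
    (hA : (g • A).IsDiag) (hB : (g • B).IsDiag) :
    IsClosed (orbit (ConjAct (GL n K)) (A, B)) := by
  rw [← orbit_smul g (A, B), Prod.smul_mk, ← hA.diagonal_diag, ← hB.diagonal_diag]
  exact isClosed_orbit_diagonal_prod _ _

end DiagonalOrbit

theorem stmt0_general {K n : Type*} [Field K] [IsAlgClosed K] [TopologicalSpace K]
    [IsTopologicalRing K] [T2Space K] [(𝓝[≠] (0 : K)).NeBot] [Fintype n] [DecidableEq n]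
    {A B : Matrix n n K} (h : Commute A B) :
    IsClosed (orbit (ConjAct (GL n K)) (A, B)) ↔
      ∃ g : ConjAct (GL n K), (g • A).IsDiag ∧ (g • B).IsDiag :=
  ⟨exists_smul_isDiag_of_isClosed_orbit h, fun ⟨_, hA, hB⟩ => isClosed_orbit_of_smul_isDiag hA hB⟩

theorem conjOrbit_eq_orbit (r : ℕ) (m₁ m₂ : Matrix (Fin r) (Fin r) ℂ) :
    conjOrbit r m₁ m₂ = orbit (ConjAct (GL (Fin r) ℂ)) (m₁, m₂) :=
  Set.ext fun _ => exists_congr fun _ => eq_comm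

/-- The `GL r ℂ`-orbit of a commuting pair of matrices is closed iff the pair is
simultaneously diagonalizable. -/
theorem stmt0 (r : ℕ) (hr : 1 ≤ r) (m₁ m₂ : Matrix (Fin r) (Fin r) ℂ)
    (hcomm : m₁ * m₂ = m₂ * m₁) :
    IsClosed (conjOrbit r m₁ m₂) ↔
      ∃ g : GL (Fin r) ℂ,
        (g.val * m₁ * g⁻¹.val).IsDiag ∧ (g.val * m₂ * g⁻¹.val).IsDiag := by
  rw [conjOrbit_eq_orbit]
  exact stmt0_general hcomm
end

section
/- Let r ≥ 1 and let (m₁, m₂) be a commuting pair of r×r complex matrices. Suppose g, h ∈ GL_r(ℂ) are such that g m₁ g⁻¹, g m₂ g⁻¹, h m₁ h⁻¹ and h m₂ h⁻¹ are all upper triangular. Then the multiset of diagonal pairs {((g m₁ g⁻¹)_{jj}, (g m₂ g⁻¹)_{jj}) : j ∈ Fin r} equals the multiset {((h m₁ h⁻¹)_{jj}, (h m₂ h⁻¹)_{jj}) : j ∈ Fin r} in Multiset (ℂ × ℂ). That is, the joint spectrum of a commuting pair is independent of the chosen simultaneous triangularization. -/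
open Matrix

/-- The multiset of pairs of diagonal entries of a pair of `r × r` complex matrices. -/
def diagPairs (r : ℕ) (A B : Matrix (Fin r) (Fin r) ℂ) : Multiset (ℂ × ℂ) :=
  (Finset.univ : Finset (Fin r)).val.map fun j => (A j j, B j j)

/-!
Over the polynomial ring `R[X]`, the pencil `m₁ + X • m₂` has a characteristic polynomial that is
invariant under simultaneous conjugation of `m₁` and `m₂`. When both matrices are upper triangular
its roots, counted with multiplicity, are the polynomials `a + X * b` for `(a, b)` a pair of
corresponding diagonal entries, and the coefficients of such a polynomial give back the pair. Taking
an indeterminate `X` instead of a generic scalar avoids any choice separating the diagonal pairs,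
and works over finite fields too.
-/

section JointSpectrum

open Polynomial

variable {n R : Type*}

/-- The multiset of pairs of corresponding diagonal entries of two matrices: the joint spectrum of
the pair when both are upper triangular. It extends `diagPairs` to any coefficients and any finite
index type. -/
def jointDiag [Fintype n] (A B : Matrix n n R) : Multiset (R × R) :=
  Finset.univ.val.map fun j => (A j j, B j j)

section Semiring

variable [Semiring R]

/-- The pencil `A + X • B` of two matrices, as a matrix over the polynomial ring, so that
its eigenvalues record those of `A` and `B` jointly. -/
noncomputable def pencil (A B : Matrix n n R) : Matrix n n R[X] :=
  A.map C + (X : R[X]) • B.map C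

/-- The linear polynomial `a + X * b` attached to a pair `(a, b)`: the eigenvalue of a pencil
that corresponds to joint eigenvalues `a` and `b`. -/
noncomputable def linearPolynomial (p : R × R) : R[X] :=
  C p.1 + X * C p.2

theorem linearPolynomial_injective :
    Function.Injective (linearPolynomial : R × R → R[X]) := by
  intro p q hpq
  have coeff_zero_eq : p.1 = q.1 := by
    simpa [linearPolynomial] using congrArg (coeff · 0) hpq
  have coeff_one_eq : p.2 = q.2 := by
    simpa [linearPolynomial, coeff_C] using congrArg (coeff · 1) hpq
  exact Prod.ext coeff_zero_eq coeff_one_eq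

theorem pencil_apply (A B : Matrix n n R) (i j : n) :
    pencil A B i j = linearPolynomial (A i j, B i j) :=
  rfl

theorem blockTriangular_pencil {α : Type*} [LT α] {b : n → α} {A B : Matrix n n R}
    (hA : A.BlockTriangular b) (hB : B.BlockTriangular b) : (pencil A B).BlockTriangular b := by
  intro i j hij
  simp [pencil_apply, linearPolynomial, hA hij, hB hij]

end Semiring

section CommRing

variable [CommRing R] [Fintype n] [DecidableEq n]

theorem pencil_units_conj (g : GL n R) (A B : Matrix n n R) :
    pencil (g.val * A * g⁻¹.val) (g.val * B * g⁻¹.val) =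
      (GeneralLinearGroup.map C g).val * pencil A B * (GeneralLinearGroup.map C g)⁻¹.val := by
  have map_conj (M : Matrix n n R) : (g.val * M * g⁻¹.val).map C =
      (GeneralLinearGroup.map C g).val * M.map C * (GeneralLinearGroup.map C g)⁻¹.val := by
    rw [Matrix.map_mul, Matrix.map_mul, ← map_inv]
    rfl
  simp only [pencil, map_conj, mul_add, add_mul, mul_smul_comm, smul_mul_assoc]

theorem charpoly_pencil_units_conj (g : GL n R) (A B : Matrix n n R) :
    (pencil (g.val * A * g⁻¹.val) (g.val * B * g⁻¹.val)).charpoly = (pencil A B).charpoly := by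
  rw [pencil_units_conj, coe_units_inv, charpoly_units_conj]

theorem roots_charpoly_of_isUpperTriangular [IsDomain R] [LinearOrder n]
    {A : Matrix n n R} (hA : A.IsUpperTriangular) :
    A.charpoly.roots = Finset.univ.val.map A.diag := by
  rw [charpoly_of_isUpperTriangular A hA,
    ← roots_multiset_prod_X_sub_C (Finset.univ.val.map A.diag), Multiset.map_map]
  rfl

theorem roots_charpoly_pencil [IsDomain R] [LinearOrder n]
    {A B : Matrix n n R} (hA : A.IsUpperTriangular) (hB : B.IsUpperTriangular) :
    (pencil A B).charpoly.roots = (jointDiag A B).map linearPolynomial := by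
  rw [roots_charpoly_of_isUpperTriangular (blockTriangular_pencil hA hB), jointDiag,
    Multiset.map_map]
  rfl

theorem jointDiag_eq_of_charpoly_pencil_eq [IsDomain R] [LinearOrder n]
    {A B A' B' : Matrix n n R} (hA : A.IsUpperTriangular) (hB : B.IsUpperTriangular)
    (hA' : A'.IsUpperTriangular) (hB' : B'.IsUpperTriangular)
    (h : (pencil A B).charpoly = (pencil A' B').charpoly) : jointDiag A B = jointDiag A' B' := by
  apply Multiset.map_injective linearPolynomial_injective
  rw [← roots_charpoly_pencil hA hB, ← roots_charpoly_pencil hA' hB', h]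

theorem stmt4_general [IsDomain R] [LinearOrder n]
    (m₁ m₂ : Matrix n n R) (g h : GL n R)
    (hg₁ : (g.val * m₁ * g⁻¹.val).IsUpperTriangular)
    (hg₂ : (g.val * m₂ * g⁻¹.val).IsUpperTriangular)
    (hh₁ : (h.val * m₁ * h⁻¹.val).IsUpperTriangular)
    (hh₂ : (h.val * m₂ * h⁻¹.val).IsUpperTriangular) :
    jointDiag (g.val * m₁ * g⁻¹.val) (g.val * m₂ * g⁻¹.val) =
      jointDiag (h.val * m₁ * h⁻¹.val) (h.val * m₂ * h⁻¹.val) := by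
  apply jointDiag_eq_of_charpoly_pencil_eq hg₁ hg₂ hh₁ hh₂
  rw [charpoly_pencil_units_conj, charpoly_pencil_units_conj]

end CommRing

end JointSpectrum

/-- The joint spectrum of a commuting pair of matrices is independent of the chosen
simultaneous triangularization: any two simultaneous upper-triangularizations of the pair
have the same multiset of diagonal pairs. -/
theorem stmt4 (r : ℕ) (hr : 1 ≤ r) (m₁ m₂ : Matrix (Fin r) (Fin r) ℂ)
    (hcomm : m₁ * m₂ = m₂ * m₁) (g h : GL (Fin r) ℂ)
    (hg₁ : ∀ i j : Fin r, j < i → (g.val * m₁ * g⁻¹.val) i j = 0)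
    (hg₂ : ∀ i j : Fin r, j < i → (g.val * m₂ * g⁻¹.val) i j = 0)
    (hh₁ : ∀ i j : Fin r, j < i → (h.val * m₁ * h⁻¹.val) i j = 0)
    (hh₂ : ∀ i j : Fin r, j < i → (h.val * m₂ * h⁻¹.val) i j = 0) :
    diagPairs r (g.val * m₁ * g⁻¹.val) (g.val * m₂ * g⁻¹.val) =
      diagPairs r (h.val * m₁ * h⁻¹.val) (h.val * m₂ * h⁻¹.val) :=
  stmt4_general m₁ m₂ g h (fun i j => hg₁ i j) (fun i j => hg₂ i j) (fun i j => hh₁ i j)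
    (fun i j => hh₂ i j)
end

section
/- Let r ≥ 1 and let d₁, d₂, d₁′, d₂′ be diagonal r×r complex matrices. There exists g ∈ GL_r(ℂ) with g d₁ g⁻¹ = d₁′ and g d₂ g⁻¹ = d₂′ if and only if there exists a permutation σ of Fin r such that (d₁′)_{jj} = (d₁)_{σ(j)σ(j)} and (d₂′)_{jj} = (d₂)_{σ(j)σ(j)} for all j. Consequently, GL_r(ℂ)-orbits of pairs of diagonal matrices under simultaneous conjugation are classified by multisets of r pairs of complex numbers. -/
open Matrix

/-!
If `g` conjugates `diagonal d` to `diagonal d'`, comparing entries of `g * diagonal d` and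
`diagonal d' * g` gives `g i j * d j = d' i * g i j`, so `d' i = d j` wherever `g i j ≠ 0`. Since
`det g ≠ 0`, some term of the Leibniz expansion is nonzero, which yields a permutation `σ` with
`g i (σ i) ≠ 0` for all `i`. This `σ` depends on `g` alone, so it works for every diagonal matrix
conjugated by `g`. Conversely, permutation matrices realise every permutation of the diagonal.
-/

section Diagonal

variable {m n R : Type*} [Fintype m] [DecidableEq m] [Fintype n] [DecidableEq n]

lemma exists_perm_forall_apply_ne_zero_of_det_ne_zero [CommRing R] {M : Matrix n n R}
    (hM : M.det ≠ 0) : ∃ σ : Equiv.Perm n, ∀ i, M i (σ i) ≠ 0 := by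
  rw [← det_transpose, det_apply] at hM
  obtain ⟨σ, -, hσ⟩ := Finset.exists_ne_zero_of_sum_ne_zero hM
  refine ⟨σ, fun i hi => hσ ?_⟩
  rw [Finset.prod_eq_zero (Finset.mem_univ i) hi, smul_zero]

lemma eq_of_mul_diagonal_eq_diagonal_mul [CommSemiring R] [IsCancelMulZero R]
    {M : Matrix m n R} {d : n → R} {d' : m → R} (h : M * diagonal d = diagonal d' * M)
    {i : m} {j : n} (hij : M i j ≠ 0) : d' i = d j := by
  have hentry : M i j * d j = d' i * M i j := by
    simpa only [mul_diagonal, diagonal_mul] using congr_fun₂ h i j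
  exact mul_right_cancel₀ hij (by rw [← hentry, mul_comm])

lemma permMatrix_mul_diagonal_mul_permMatrix_inv [NonAssocSemiring R] (σ : Equiv.Perm n)
    (d : n → R) :
    σ.permMatrix R * diagonal d * (σ⁻¹).permMatrix R = diagonal (d ∘ σ) := by
  rw [PEquiv.toMatrix_toPEquiv_mul, PEquiv.mul_toMatrix_toPEquiv, submatrix_submatrix]
  exact submatrix_diagonal_equiv d σ

theorem exists_conj_diagonal_iff_exists_perm [CommRing R] [IsDomain R] {ι : Type*}
    (d d' : ι → n → R) :
    (∃ g : GL n R, ∀ k, g.val * diagonal (d k) * g⁻¹.val = diagonal (d' k)) ↔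
      ∃ σ : Equiv.Perm n, ∀ k, d' k = d k ∘ σ := by
  constructor
  · rintro ⟨g, hg⟩
    obtain ⟨σ, hσ⟩ := exists_perm_forall_apply_ne_zero_of_det_ne_zero g.det_ne_zero
    exact ⟨σ, fun k => funext fun j => eq_of_mul_diagonal_eq_diagonal_mul
      ((Units.mul_inv_eq_iff_eq_mul g).1 (hg k)) (hσ j)⟩
  · rintro ⟨σ, hσ⟩
    -- `permMatrixHom` sends `σ` to the permutation matrix of `σ⁻¹`.
    refine ⟨permMatrixHom.toHomUnits σ⁻¹, fun k => ?_⟩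
    rw [hσ k]
    exact permMatrix_mul_diagonal_mul_permMatrix_inv σ (d k)

end Diagonal

theorem map_univ_val_eq_iff_exists_equiv {α β γ : Type*} [Fintype α] [Fintype β]
    {f : α → γ} {g : β → γ} :
    Finset.univ.val.map f = Finset.univ.val.map g ↔ ∃ e : α ≃ β, f = g ∘ e := by
  classical
  constructor
  · intro h
    have hcard (c : γ) : Fintype.card {a // f a = c} = Fintype.card {b // g b = c} := by
      simpa only [Multiset.count_map, ← Finset.filter_val, Finset.card_val, Fintype.card_subtype,
        eq_comm (a := c)] using congrArg (Multiset.count c) h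
    let fiberEquiv (c : γ) : {a // f a = c} ≃ {b // g b = c} := Fintype.equivOfCardEq (hcard c)
    exact ⟨.ofFiberEquiv fiberEquiv,
      funext fun a => (Equiv.ofFiberEquiv_map fiberEquiv a).symm⟩
  · rintro ⟨e, rfl⟩
    rw [← Multiset.map_map, Multiset.map_univ_val_equiv]

theorem stmt5_general {n R : Type*} [Fintype n] [DecidableEq n] [CommRing R] [IsDomain R]
    {d₁ d₂ d₁' d₂' : Matrix n n R}
    (h₁ : d₁.IsDiag) (h₂ : d₂.IsDiag) (h₁' : d₁'.IsDiag) (h₂' : d₂'.IsDiag) :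
    ((∃ g : GL n R, g.val * d₁ * g⁻¹.val = d₁' ∧ g.val * d₂ * g⁻¹.val = d₂') ↔
      ∃ σ : Equiv.Perm n, ∀ j, d₁' j j = d₁ (σ j) (σ j) ∧ d₂' j j = d₂ (σ j) (σ j)) ∧
    ((∃ g : GL n R, g.val * d₁ * g⁻¹.val = d₁' ∧ g.val * d₂ * g⁻¹.val = d₂') ↔
      Finset.univ.val.map (fun j => (d₁ j j, d₂ j j)) =
        Finset.univ.val.map fun j => (d₁' j j, d₂' j j)) := by
  have hconj : (∃ g : GL n R, g.val * d₁ * g⁻¹.val = d₁' ∧ g.val * d₂ * g⁻¹.val = d₂') ↔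
      ∃ σ : Equiv.Perm n, ∀ j, d₁' j j = d₁ (σ j) (σ j) ∧ d₂' j j = d₂ (σ j) (σ j) := by
    simpa [Fin.forall_fin_two, h₁.diagonal_diag, h₂.diagonal_diag, h₁'.diagonal_diag,
      h₂'.diagonal_diag, funext_iff, forall_and] using
      exists_conj_diagonal_iff_exists_perm ![d₁.diag, d₂.diag] ![d₁'.diag, d₂'.diag]
  refine ⟨hconj, hconj.trans ?_⟩
  rw [eq_comm, map_univ_val_eq_iff_exists_equiv]
  simp only [funext_iff, Function.comp_apply, Prod.mk.injEq]

/-- Two pairs of diagonal matrices are simultaneously conjugate under `GL r ℂ` iff their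
diagonal pairs differ by a permutation; consequently, `GL r ℂ`-orbits of pairs of diagonal
matrices are classified by the multiset of the `r` pairs of diagonal entries. -/
theorem stmt5 (r : ℕ) (hr : 1 ≤ r) (d₁ d₂ d₁' d₂' : Matrix (Fin r) (Fin r) ℂ)
    (h₁ : d₁.IsDiag) (h₂ : d₂.IsDiag) (h₁' : d₁'.IsDiag) (h₂' : d₂'.IsDiag) :
    ((∃ g : GL (Fin r) ℂ, g.val * d₁ * g⁻¹.val = d₁' ∧ g.val * d₂ * g⁻¹.val = d₂') ↔
      ∃ σ : Equiv.Perm (Fin r),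
        ∀ j : Fin r, d₁' j j = d₁ (σ j) (σ j) ∧ d₂' j j = d₂ (σ j) (σ j)) ∧
    ((∃ g : GL (Fin r) ℂ, g.val * d₁ * g⁻¹.val = d₁' ∧ g.val * d₂ * g⁻¹.val = d₂') ↔
      diagPairs r d₁ d₂ = diagPairs r d₁' d₂') :=
  stmt5_general h₁ h₂ h₁' h₂'
end

section
/- Let r ≥ 1, let (m₁, m₂) be a commuting pair of r×r complex matrices, let A = Algebra.adjoin ℂ {m₁, m₂} be the unital ℂ-subalgebra of M_r(ℂ) generated by m₁ and m₂, and suppose v ∈ ℂʳ is cyclic for (m₁, m₂). Then the ℂ-linear evaluation map A → ℂʳ, a ↦ a.mulVec v, is a linear isomorphism; in particular, the ℂ-dimension of A equals r. -/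
open Matrix

/-- `v` is a cyclic vector for the pair `(m₁, m₂)`: the orbit of `v` under the unital
subalgebra of `M_r(ℂ)` generated by `m₁` and `m₂` is all of `ℂʳ`. -/
def CyclicVec (r : ℕ) (m₁ m₂ : Matrix (Fin r) (Fin r) ℂ) (v : Fin r → ℂ) : Prop :=
  {w | ∃ a ∈ Algebra.adjoin ℂ {m₁, m₂}, Matrix.mulVec a v = w} = Set.univ

/-! For a commutative action, the point `a • x` determines `a • b • x = b • a • x` for every `b`. If
every point has the form `b • x` and the action is faithful, then `a • x` therefore determines `a`.
Matrices act faithfully on column vectors, so a commutative matrix algebra with a cyclic vector is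
isomorphic, by evaluation, to the space of column vectors. -/

theorem smul_left_injective_of_surjective {A X : Type*} [SMul A X] [SMulCommClass A A X]
    [FaithfulSMul A X] {x : X} (hx : Function.Surjective fun a : A ↦ a • x) :
    Function.Injective fun a : A ↦ a • x := by
  intro a b (hab : a • x = b • x)
  refine eq_of_smul_eq_smul (α := X) fun y ↦ ?_
  obtain ⟨c, rfl⟩ := hx y
  calc
    a • c • x = c • a • x := smul_comm a c x
    _ = c • b • x := by rw [hab]
    _ = b • c • x := smul_comm c b x

theorem smulCommClass_self_of_isMulCommutative (A X : Type*) [Semigroup A] [IsMulCommutative A]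
    [SemigroupAction A X] : SMulCommClass A A X where
  smul_comm a b x := by rw [← mul_smul, ← mul_smul, mul_comm' a b]

/-- The evaluation isomorphism `a ↦ a • v` from a semiring onto a faithful module on which it acts
by commuting operators and which is generated by `v`. Commutativity is encoded as
`SMulCommClass A A M`, so that `A` need not carry a bundled commutative structure. -/
noncomputable def evalLinearEquiv {A M : Type*} [Semiring A] [AddCommMonoid M] [Module A M]
    [SMulCommClass A A M] [FaithfulSMul A M] (v : M)
    (hv : Function.Surjective fun a : A ↦ a • v) : A ≃ₗ[A] M :=
  .ofBijective (LinearMap.toSpanSingleton A M v) ⟨smul_left_injective_of_surjective hv, hv⟩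

instance instFaithfulSMulMatrix {R n : Type*} [Semiring R] [Fintype n] [DecidableEq n] :
    FaithfulSMul (Matrix n n R) (n → R) where
  eq_of_smul_eq_smul := Matrix.ext_iff_smul.mpr

theorem stmt7_general {R n : Type*} [CommSemiring R] [StrongRankCondition R] [Fintype n]
    [DecidableEq n] (A : Subalgebra R (Matrix n n R)) [IsMulCommutative A] (v : n → R)
    (hv : ∀ w, ∃ a ∈ A, a *ᵥ v = w) :
    (∃ e : A ≃ₗ[R] (n → R), ∀ a : A, e a = (a : Matrix n n R) *ᵥ v) ∧
      Module.finrank R A = Fintype.card n := by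
  have := smulCommClass_self_of_isMulCommutative A (n → R)
  have hgen : Function.Surjective fun a : A ↦ a • v := fun w ↦
    let ⟨a, ha, haw⟩ := hv w
    ⟨⟨a, ha⟩, haw⟩
  let e : A ≃ₗ[R] (n → R) := (evalLinearEquiv v hgen).restrictScalars R
  exact ⟨⟨e, fun _ ↦ rfl⟩, e.finrank_eq.trans (Module.finrank_fintype_fun_eq_card R)⟩

/-- If `v` is cyclic for the commuting pair `(m₁, m₂)`, then evaluation at `v` is a linear
isomorphism from `Algebra.adjoin ℂ {m₁, m₂}` onto `ℂʳ`; in particular this algebra has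
dimension `r`. -/
theorem stmt7 (r : ℕ) (hr : 1 ≤ r) (m₁ m₂ : Matrix (Fin r) (Fin r) ℂ)
    (hcomm : m₁ * m₂ = m₂ * m₁) (v : Fin r → ℂ) (hv : CyclicVec r m₁ m₂ v) :
    (∃ e : Algebra.adjoin ℂ {m₁, m₂} ≃ₗ[ℂ] (Fin r → ℂ),
        ∀ a : Algebra.adjoin ℂ {m₁, m₂}, e a = Matrix.mulVec (a : Matrix (Fin r) (Fin r) ℂ) v) ∧
      Module.finrank ℂ (Algebra.adjoin ℂ {m₁, m₂}) = r := by
  have := Algebra.isMulCommutative_adjoin ℂ (s := {m₁, m₂}) (by simp [hcomm])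
  simpa using stmt7_general (Algebra.adjoin ℂ {m₁, m₂}) v (Set.eq_univ_iff_forall.mp hv)
end

section
/- Let r ≥ 1 and let (m₁, m₂) be a commuting pair of r×r complex matrices. Then the unital ℂ-subalgebra Algebra.adjoin ℂ {m₁, m₂} of M_r(ℂ) generated by m₁ and m₂ has ℂ-dimension at most r. -/
open Matrix

/-! Commuting `a` and `b` make the underlying space a module `M` over the principal ideal domain
`D = K[X]`, with `X` acting as `a` and `b` as a `D`-linear endomorphism, and the algebra generated
by `a` and `b` is the image of `D[b]`. So it suffices that `D[b]` is no longer than `M`.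

Build `0 = N₀ ≤ N₁ ≤ ⋯` in `M` by adjoining to `Nₙ` a vector whose image in `M ⧸ Nₙ` has the same
annihilator `Iₙ` as the whole of `M ⧸ Nₙ`; the successive quotients are then `D ⧸ Iₙ`. On the other
side, `D[b]` is filtered by the spans of `1, b, …, bⁿ⁻¹`. For `q ∈ Iₙ`, the submodule `q M ≤ Nₙ` is
generated by `n` elements because `D` is principal, so Cayley-Hamilton provides a monic polynomial
of degree `n` in `b` that vanishes on `q M`. Hence `q bⁿ` lies in the span of the lower powers, and
the `n`-th quotient of the second filtration is a quotient of `D ⧸ Iₙ`. -/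

open Polynomial

section Ring

variable {R D M : Type*} [CommRing R] [CommRing D] [Algebra R D] [AddCommGroup M] [Module R M]
  [Module D M] [IsScalarTower R D M]

lemma torsionOf_mkQ_eq_colon_singleton (N : Submodule D M) (v : M) :
    Ideal.torsionOf D (M ⧸ N) (N.mkQ v) = N.colon {v} := by
  ext q
  rw [Ideal.mem_torsionOf_iff, ← map_smul, Submodule.mkQ_apply, Submodule.Quotient.mk_eq_zero,
    Submodule.mem_colon_singleton]

lemma length_sup_span_singleton (N : Submodule D M) (v : M) :
    Module.length R ↥(N ⊔ Submodule.span D {v}) =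
      Module.length R N + Module.length R (D ⧸ N.colon {v}) := by
  have h_image : (N ⊔ Submodule.span D {v}).map N.mkQ = Submodule.span D {N.mkQ v} := by
    rw [Submodule.map_sup, Submodule.mkQ_map_self, bot_sup_eq, Submodule.map_span,
      Set.image_singleton]
  have h_le : N ≤ N ⊔ Submodule.span D {v} := le_sup_left
  let g := N.mkQ.submoduleMap (N ⊔ Submodule.span D {v})
  have h_exact : Function.Exact (Submodule.inclusion h_le) g := by
    rintro ⟨x, hx⟩
    simp [g, Subtype.ext_iff]
  have e : (D ⧸ N.colon {v}) ≃ₗ[D] (N ⊔ Submodule.span D {v}).map N.mkQ :=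
    Submodule.quotEquivOfEq _ _ (torsionOf_mkQ_eq_colon_singleton N v).symm ≪≫ₗ
      Ideal.quotTorsionOfEquivSpanSingleton D _ _ ≪≫ₗ LinearEquiv.ofEq _ _ h_image.symm
  rw [(e.restrictScalars R).length_eq]
  exact Module.length_eq_add_of_exact
    ((Submodule.inclusion h_le).restrictScalars R) (g.restrictScalars R)
    (Submodule.inclusion_injective h_le) (N.mkQ.submoduleMap_surjective _) h_exact

lemma length_quotient_anti {I J : Ideal D} (h : I ≤ J) :
    Module.length R (D ⧸ J) ≤ Module.length R (D ⧸ I) :=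
  Module.length_le_of_surjective ((Submodule.factor h).restrictScalars R)
    (Submodule.factor_surjective h)

lemma coe_aeval_restrict_apply (f : Module.End D M) {P : Submodule D M} (hP : ∀ x ∈ P, f x ∈ P)
    (p : D[X]) (x : P) : (aeval (f.restrict hP) p x : M) = aeval f p x := by
  have h_pow (i : ℕ) : (((f.restrict hP) ^ i) x : M) = (f ^ i) x := by
    rw [Module.End.pow_restrict, LinearMap.coe_restrict_apply]
  simp [aeval_eq_sum_range, LinearMap.sum_apply, h_pow]

lemma spanFinrank_sup_span_singleton_le {N : Submodule D M} (hN : N.FG) (v : M) :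
    (N ⊔ Submodule.span D {v}).spanFinrank ≤ N.spanFinrank + 1 := by
  rw [← (hN.sup (Submodule.fg_span_singleton v)).spanRank_le_iff, Nat.cast_add, Nat.cast_one,
    ← hN.spanRank_eq_spanFinrank]
  refine Submodule.spanRank_sup_le_sum_spanRank.trans (add_le_add_right ?_ _)
  exact (Submodule.spanRank_span_le_card {v}).trans_eq (Cardinal.mk_singleton v)

variable {A : Type*} [Ring A] [Algebra D A]

lemma span_pow_Iio_succ (b : A) (n : ℕ) :
    Submodule.span D ((b ^ ·) '' Set.Iio (n + 1)) =
      Submodule.span D ((b ^ ·) '' Set.Iio n) ⊔ Submodule.span D {b ^ n} := by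
  rw [← Order.succ_eq_add_one, Order.Iio_succ_eq_insert, Set.image_insert_eq,
    Submodule.span_insert, sup_comm]

lemma smul_pow_mem_span_pow_of_smul_aeval_eq_zero {p : D[X]} (hp : p.Monic) {q : D} {b : A}
    (h : q • aeval b p = 0) :
    q • b ^ p.natDegree ∈ Submodule.span D ((b ^ ·) '' Set.Iio p.natDegree) := by
  rw [aeval_eq_sum_range, Finset.sum_range_succ, hp.coeff_natDegree, one_smul, smul_add,
    add_eq_zero_iff_eq_neg'] at h
  rw [h]
  refine neg_mem (Submodule.smul_mem _ q (Submodule.sum_mem _ fun i hi ↦ ?_))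
  exact Submodule.smul_mem _ _ <|
    Submodule.subset_span (Set.mem_image_of_mem _ (Finset.mem_range.1 hi))

end Ring

section PrincipalIdealDomain

variable {R D M : Type*} [CommRing R] [CommRing D] [IsDomain D] [IsPrincipalIdealRing D]
  [Algebra R D] [AddCommGroup M] [Module R M] [Module D M] [IsScalarTower R D M]

lemma spanFinrank_mono_of_isPrincipalIdealRing {N P : Submodule D M} (hP : P.FG) (h : N ≤ P) :
    N.spanFinrank ≤ P.spanFinrank := by
  obtain ⟨s, hs_card, hs_span⟩ := hP.exists_span_finset_card_eq_spanFinrank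
  let π : (s → D) →ₗ[D] M := Fintype.linearCombination D Subtype.val
  have h_map : (N.comap π).map π = N := by
    rw [Submodule.map_comap_eq, inf_eq_right, Fintype.range_linearCombination]
    simpa [hs_span] using h
  calc N.spanFinrank = ((N.comap π).map π).spanFinrank := by rw [h_map]
    _ ≤ (N.comap π).spanFinrank := Submodule.spanFinrank_map_le_of_fg π (IsNoetherian.noetherian _)
    _ = Module.finrank D (N.comap π) := by
      rw [Module.finrank_eq_spanFinrank_of_free, Submodule.spanFinrank_top]
    _ ≤ Module.finrank D (s → D) := Submodule.finrank_le _
    _ = P.spanFinrank := by rw [Module.finrank_fintype_fun_eq_card, Fintype.card_coe, hs_card]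

lemma exists_colon_singleton_eq_colon_univ [Module.Finite D M] (N : Submodule D M) :
    ∃ v : M, N.colon {v} = N.colon Set.univ := by
  obtain ⟨w, hw⟩ := Module.exists_ker_toSpanSingleton_eq_annihilator D (M ⧸ N)
  obtain ⟨v, rfl⟩ := N.mkQ_surjective w
  exact ⟨v, by
    rw [← torsionOf_mkQ_eq_colon_singleton, ← Submodule.annihilator_quotient, ← hw]; rfl⟩

lemma exists_monic_natDegree_eq_and_smul_aeval_eq_zero {N : Submodule D M} (hN : N.FG) {n : ℕ}
    (hn : N.spanFinrank ≤ n) {q : D} (hq : q ∈ N.colon Set.univ) (f : Module.End D M) :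
    ∃ p : D[X], p.Monic ∧ p.natDegree = n ∧ q • aeval f p = 0 := by
  let P : Submodule D M := LinearMap.range (LinearMap.lsmul D M q)
  have hPN : P ≤ N := by
    rintro _ ⟨x, rfl⟩
    exact Submodule.mem_colon.1 hq x trivial
  have hfP : ∀ x ∈ P, f x ∈ P := by
    rintro _ ⟨x, rfl⟩
    exact ⟨f x, (map_smul f q x).symm⟩
  have : Module.Finite D N := Module.Finite.iff_fg.2 hN
  have : Module.Finite D P := .of_injective (Submodule.inclusion hPN)
    (Submodule.inclusion_injective hPN)
  obtain ⟨p, hp_monic, hp_deg, hp⟩ :=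
    LinearMap.exists_monic_and_natDegree_eq_and_aeval_eq_zero D (f.restrict hfP)
  have hpn : p.natDegree ≤ n := by
    rw [hp_deg, Submodule.spanFinrank_top]
    exact (spanFinrank_mono_of_isPrincipalIdealRing hN hPN).trans hn
  refine ⟨X ^ (n - p.natDegree) * p, (monic_X_pow _).mul hp_monic, ?_, ?_⟩
  · rw [(monic_X_pow _).natDegree_mul hp_monic, natDegree_X_pow, Nat.sub_add_cancel hpn]
  · have h_vanish : q • aeval f p = 0 := by
      ext x
      have := coe_aeval_restrict_apply f hfP p ⟨q • x, x, rfl⟩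
      rw [hp, LinearMap.zero_apply, Submodule.coe_zero, map_smul] at this
      exact this.symm
    rw [map_mul, ← mul_smul_comm, h_vanish, mul_zero]

lemma exists_spanFinrank_le_and_length_span_pow_le [Module.Finite D M] (f : Module.End D M)
    (n : ℕ) :
    ∃ N : Submodule D M, N.spanFinrank ≤ n ∧
      Module.length R (Submodule.span D ((f ^ ·) '' Set.Iio n)) ≤ Module.length R N := by
  induction n with
  | zero =>
    have h_Iio : Set.Iio 0 = (∅ : Set ℕ) := by ext; simp
    refine ⟨⊥, by simp, ?_⟩
    rw [h_Iio, Set.image_empty, Submodule.span_empty, Module.length_eq_zero]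
    exact zero_le
  | succ n ih =>
    obtain ⟨N, hN, h_length⟩ := ih
    obtain ⟨v, hv⟩ := exists_colon_singleton_eq_colon_univ N
    have hN_fg : N.FG := IsNoetherian.noetherian N
    refine ⟨N ⊔ Submodule.span D {v},
      (spanFinrank_sup_span_singleton_le hN_fg v).trans (Nat.add_le_add_right hN 1), ?_⟩
    have h_colon : N.colon {v} ≤ (Submodule.span D ((f ^ ·) '' Set.Iio n)).colon {f ^ n} := by
      intro q hq
      obtain ⟨p, hp_monic, rfl, hp⟩ :=
        exists_monic_natDegree_eq_and_smul_aeval_eq_zero hN_fg hN (hv ▸ hq) f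
      exact Submodule.mem_colon_singleton.2
        (smul_pow_mem_span_pow_of_smul_aeval_eq_zero hp_monic hp)
    rw [span_pow_Iio_succ, length_sup_span_singleton, length_sup_span_singleton]
    exact add_le_add h_length (length_quotient_anti h_colon)

theorem length_adjoin_singleton_le [Module.Finite D M] (f : Module.End D M) :
    Module.length R (Algebra.adjoin D {f}) ≤ Module.length R M := by
  classical
  obtain ⟨χ, hχ_monic, hχ⟩ := LinearMap.exists_monic_and_aeval_eq_zero D f
  have h_span := Submodule.span_range_natDegree_eq_adjoin hχ_monic hχ
  rw [Finset.coe_image, Finset.coe_range] at h_span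
  obtain ⟨N, -, hN⟩ := exists_spanFinrank_le_and_length_span_pow_le (R := R) f χ.natDegree
  rw [h_span] at hN
  exact hN.trans <|
    Module.length_le_of_injective (N.subtype.restrictScalars R) N.subtype_injective

end PrincipalIdealDomain

section Field

variable {K V : Type*} [Field K] [AddCommGroup V] [Module K V]

/-- The embedding of the endomorphisms of the `K[X]`-module on `V` where `X` acts as `a` into the
endomorphisms of `V`; its image is the centralizer of `a`. -/
noncomputable def endAEvalToEnd (a : Module.End K V) :
    Module.End K[X] (Module.AEval' a) →ₐ[K] Module.End K V :=
  ((Module.AEval'.of a).symm.conjAlgEquiv K).toAlgHom.comp <|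
    AlgHom.ofLinearMap (LinearMap.restrictScalarsₗ K K[X] _ _ K) rfl fun _ _ ↦ rfl

lemma endAEvalToEnd_apply (a : Module.End K V) (f : Module.End K[X] (Module.AEval' a)) (x : V) :
    endAEvalToEnd a f x = (Module.AEval'.of a).symm (f (Module.AEval'.of a x)) :=
  rfl

lemma endAEvalToEnd_algebraMap_X (a : Module.End K V) :
    endAEvalToEnd a (algebraMap K[X] _ X) = a := by
  ext x
  rw [endAEvalToEnd_apply, Module.algebraMap_end_apply, Module.AEval'.X_smul_of,
    LinearEquiv.symm_apply_apply]

lemma exists_endAEvalToEnd_eq {a b : Module.End K V} (hab : a * b = b * a) :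
    ∃ f, endAEvalToEnd a f = b := by
  refine ⟨LinearMap.ofAEval a ((Module.AEval'.of a).toLinearMap ∘ₗ b) fun x ↦ ?_, rfl⟩
  have : b (a x) = a (b x) := (LinearMap.congr_fun hab x).symm
  simp [this, Module.AEval'.X_smul_of]

theorem finrank_adjoin_pair_le_finrank [FiniteDimensional K V] {a b : Module.End K V}
    (hab : a * b = b * a) :
    Module.finrank K (Algebra.adjoin K {a, b}) ≤ Module.finrank K V := by
  obtain ⟨f, hf⟩ := exists_endAEvalToEnd_eq hab
  let S : Subalgebra K (Module.End K[X] (Module.AEval' a)) :=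
    (Algebra.adjoin K[X] {f}).restrictScalars K
  have h_le : Algebra.adjoin K {a, b} ≤ S.map (endAEvalToEnd a) := by
    refine Algebra.adjoin_le (Set.pair_subset ?_ ?_)
    · exact ⟨_, (Algebra.adjoin K[X] {f}).algebraMap_mem X, endAEvalToEnd_algebraMap_X a⟩
    · exact ⟨f, Algebra.self_mem_adjoin_singleton K[X] f, hf⟩
  rw [← Nat.cast_le (α := ℕ∞), ← Module.length_eq_finrank, ← Module.length_eq_finrank]
  calc Module.length K (Algebra.adjoin K {a, b})
      ≤ Module.length K (S.map (endAEvalToEnd a)) :=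
        Module.length_le_of_injective (Subalgebra.inclusion h_le).toLinearMap
          (Subalgebra.inclusion_injective h_le)
    _ ≤ Module.length K S :=
        Module.length_le_of_surjective
          ((endAEvalToEnd a).toLinearMap.submoduleMap (Subalgebra.toSubmodule S))
          (LinearMap.submoduleMap_surjective _ _)
    _ ≤ Module.length K (Module.AEval' a) := length_adjoin_singleton_le f
    _ = Module.length K V := (Module.AEval'.of a).symm.length_eq

lemma finrank_adjoin_pair_map {A B : Type*} [Ring A] [Ring B] [Algebra K A] [Algebra K B]
    (e : A ≃ₐ[K] B) (x y : A) :
    Module.finrank K (Algebra.adjoin K {e x, e y}) =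
      Module.finrank K (Algebra.adjoin K {x, y}) := by
  have h_map : (Algebra.adjoin K {x, y}).map e.toAlgHom = Algebra.adjoin K {e x, e y} := by
    rw [AlgHom.map_adjoin, Set.image_pair]
    rfl
  rw [← h_map]
  exact (e.subalgebraMap _).toLinearEquiv.finrank_eq.symm

end Field

theorem stmt9_general {K n : Type*} [Field K] [Fintype n] [DecidableEq n] (m₁ m₂ : Matrix n n K)
    (hcomm : m₁ * m₂ = m₂ * m₁) :
    Module.finrank K (Algebra.adjoin K {m₁, m₂}) ≤ Fintype.card n := by
  let e : Matrix n n K ≃ₐ[K] Module.End K (n → K) := Matrix.toLinAlgEquiv'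
  have h_comm : e m₁ * e m₂ = e m₂ * e m₁ := by rw [← map_mul, hcomm, map_mul]
  rw [← finrank_adjoin_pair_map e, ← Module.finrank_fintype_fun_eq_card K]
  exact finrank_adjoin_pair_le_finrank h_comm

/-- The unital subalgebra of `M_r(ℂ)` generated by a commuting pair of `r × r` complex
matrices has `ℂ`-dimension at most `r`. -/
theorem stmt9 (r : ℕ) (hr : 1 ≤ r) (m₁ m₂ : Matrix (Fin r) (Fin r) ℂ)
    (hcomm : m₁ * m₂ = m₂ * m₁) :
    Module.finrank ℂ (Algebra.adjoin ℂ {m₁, m₂}) ≤ r := by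
  simpa using stmt9_general m₁ m₂ hcomm
end

section
/- Let r ≥ 1, let (m₁, m₂) be a commuting pair of r×r complex matrices, and let v, v′ ∈ ℂʳ both be cyclic for (m₁, m₂). Then there exists a ∈ Algebra.adjoin ℂ {m₁, m₂} such that a is invertible in M_r(ℂ) and a.mulVec v = v′. That is, any two cyclic vectors for a commuting pair are related by an invertible element of the algebra generated by the pair. -/
open Matrix

/-! Let `a` and `b` be elements of the algebra with `a v = v'` and `b v' = v`. Then `b a` fixes `v`.
Since the algebra is commutative, `b a` also fixes `c v` for every `c` in it, hence every vector.
As the action is faithful, `b a = 1`. -/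

section CommMonoid

variable {M X : Type*} [CommMonoid M] [MulAction M X] [FaithfulSMul M X] {x y : X}

theorem eq_one_of_smul_eq_self {m : M} (hx : Function.Surjective fun c : M ↦ c • x)
    (hm : m • x = x) : m = 1 := by
  refine FaithfulSMul.eq_of_smul_eq_smul (α := X) fun z ↦ ?_
  obtain ⟨c, rfl⟩ := hx z
  calc m • c • x = c • m • x := smul_comm m c x
    _ = (1 : M) • c • x := by rw [hm, one_smul]

theorem exists_isUnit_smul_eq (hx : Function.Surjective fun c : M ↦ c • x)
    (hxy : x ∈ MulAction.orbit M y) : ∃ a : M, IsUnit a ∧ a • x = y := by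
  obtain ⟨a, hax : a • x = y⟩ := hx y
  obtain ⟨b, hby : b • y = x⟩ := hxy
  have hba : b * a = 1 := eq_one_of_smul_eq_self hx (by rw [mul_smul, hax, hby])
  exact ⟨a, .of_mul_eq_one_right b hba, hax⟩

end CommMonoid

theorem stmt12_general {R A X : Type*} [CommSemiring R] [Semiring A] [Algebra R A]
    [MulAction A X] [FaithfulSMul A X] {s : Set A} (hs : ∀ a ∈ s, ∀ b ∈ s, a * b = b * a)
    {x y : X} (hx : ∀ z, ∃ a ∈ Algebra.adjoin R s, a • x = z)
    (hy : ∃ b ∈ Algebra.adjoin R s, b • y = x) :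
    ∃ a ∈ Algebra.adjoin R s, IsUnit a ∧ a • x = y := by
  have := Algebra.isMulCommutative_adjoin R hs
  obtain ⟨b, hb, hby⟩ := hy
  have hsurj : Function.Surjective fun c : Algebra.adjoin R s ↦ c • x := fun z ↦
    let ⟨c, hc, hcx⟩ := hx z
    ⟨⟨c, hc⟩, hcx⟩
  have hxy : x ∈ MulAction.orbit (Algebra.adjoin R s) y := ⟨⟨b, hb⟩, hby⟩
  open scoped IsMulCommutative in
  obtain ⟨a, ha, hax⟩ := exists_isUnit_smul_eq hsurj hxy
  exact ⟨a, a.2, ha.map (Algebra.adjoin R s).val, hax⟩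

open scoped Matrix.Module in
instance matrix_faithfulSMul {n R M : Type*} [Fintype n] [DecidableEq n] [Ring R]
    [AddCommGroup M] [Module R M] [FaithfulSMul R M] :
    FaithfulSMul (Matrix n n R) (n → M) where
  eq_of_smul_eq_smul {A B} h := by
    ext i j
    refine FaithfulSMul.eq_of_smul_eq_smul (α := M) fun x ↦ ?_
    simpa [Pi.single_apply] using congrFun (h (Pi.single j x)) i

theorem cyclicVec_iff {r : ℕ} {m₁ m₂ : Matrix (Fin r) (Fin r) ℂ} {v : Fin r → ℂ} :
    CyclicVec r m₁ m₂ v ↔ ∀ w, ∃ a ∈ Algebra.adjoin ℂ {m₁, m₂}, a *ᵥ v = w :=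
  Set.eq_univ_iff_forall

/-- Any two cyclic vectors for a commuting pair `(m₁, m₂)` are related by an invertible
element of the unital subalgebra generated by `m₁` and `m₂`. -/
theorem stmt12 (r : ℕ) (hr : 1 ≤ r) (m₁ m₂ : Matrix (Fin r) (Fin r) ℂ)
    (hcomm : m₁ * m₂ = m₂ * m₁) (v v' : Fin r → ℂ)
    (hv : CyclicVec r m₁ m₂ v) (hv' : CyclicVec r m₁ m₂ v') :
    ∃ a ∈ Algebra.adjoin ℂ {m₁, m₂}, IsUnit a ∧ Matrix.mulVec a v = v' := by
  -- The action `a • v` given by `Matrix.Module` is definitionally `a *ᵥ v`.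
  open scoped Matrix.Module in
  exact stmt12_general (by simp [hcomm]) (cyclicVec_iff.1 hv) (cyclicVec_iff.1 hv' v)
end

section
/- Let r ≥ 1. Suppose (m₁, m₂, v) and (m₁′, m₂′, v′) are triples where (m₁, m₂) and (m₁′, m₂′) are commuting pairs of r×r complex matrices, v is cyclic for (m₁, m₂), v′ is cyclic for (m₁′, m₂′), and there exists g ∈ GL_r(ℂ) with g m₁ g⁻¹ = m₁′ and g m₂ g⁻¹ = m₂′. Then there exists h ∈ GL_r(ℂ) with h m₁ h⁻¹ = m₁′, h m₂ h⁻¹ = m₂′ and h.mulVec v = v′. Consequently, the forgetful map (m₁, m₂, v) ↦ (m₁, m₂) induces a bijection between GL_r(ℂ)-orbits of triples with cyclic vector and GL_r(ℂ)-orbits of commuting pairs admitting a cyclic vector. -/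
open Matrix

/-!
If `v` is cyclic for a commutative algebra `A` of operators, then an element of `A` is determined
by its value at `v`: from `a • v = v` we get `a • (c • v) = c • (a • v) = c • v` for all `c ∈ A`.
Given two cyclic vectors `v` and `w` of `A`, choose `a, b ∈ A` with `a • v = w` and `b • w = v`;
then `b * a` fixes `v`, so `b * a = 1`, and `a` is an invertible operator commuting with `A`.

Let `g` conjugate the first commuting pair to the second. Then `g⁻¹ • v'` is cyclic for the first
pair, so `a • v = g⁻¹ • v'` for such an `a`, and `g * a` is the required conjugating element.
-/

open Algebra ConjAct MulAction
open scoped Pointwise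

section CommutativeMonoid

variable {A X : Type*} [Monoid A] [IsMulCommutative A] [MulAction A X] {x y : X}

theorem eq_one_of_orbit_eq_univ_of_smul_eq [FaithfulSMul A X] (hx : orbit A x = Set.univ) {a : A}
    (ha : a • x = x) : a = 1 := by
  refine FaithfulSMul.eq_of_smul_eq_smul fun z : X ↦ ?_
  obtain ⟨c, rfl⟩ := mem_orbit_iff.mp (hx ▸ Set.mem_univ z)
  calc a • c • x = c • a • x := by rw [smul_smul, mul_comm' a c, mul_smul]
    _ = (1 : A) • c • x := by rw [ha, one_smul]

theorem exists_units_smul_eq_of_orbit_eq_univ [FaithfulSMul A X] (hx : orbit A x = Set.univ)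
    (hxy : x ∈ orbit A y) : ∃ u : Aˣ, u • x = y := by
  obtain ⟨a, hax⟩ := mem_orbit_iff.mp (hx ▸ Set.mem_univ y)
  obtain ⟨b, hby⟩ := mem_orbit_iff.mp hxy
  have hba : b * a = 1 :=
    eq_one_of_orbit_eq_univ_of_smul_eq hx (by rw [mul_smul, hax, hby])
  exact ⟨⟨a, b, (mul_comm' a b).trans hba, hba⟩, hax⟩

end CommutativeMonoid

section Algebra

variable {R E F X Y : Type*} [CommSemiring R] [Semiring E] [Algebra R E] [Semiring F] [Algebra R F]
  [MulAction E X] [MulAction F Y]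

theorem image_orbit_adjoin (φ : E →ₐ[R] F) {f : X → Y}
    (hf : ∀ (a : E) (z : X), f (a • z) = φ a • f z) (S : Set E) (x : X) :
    f '' orbit (adjoin R S) x = orbit (adjoin R (φ '' S)) (f x) := by
  ext y
  simp [← AlgHom.map_adjoin, mem_orbit_iff, Subalgebra.smul_def, hf]

theorem smul_orbit_adjoin (g : Eˣ) (S : Set E) (x : X) :
    g • orbit (adjoin R S) x = orbit (adjoin R ((fun a : E ↦ ↑g * a * ↑g⁻¹) '' S)) (g • x) := by
  refine image_orbit_adjoin (MulSemiringAction.toAlgHom R E (toConjAct g)) (fun a z ↦ ?_) S x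
  calc g • a • z = (g * a * (↑g⁻¹ * g) : E) • z := by
        rw [Units.inv_mul, mul_one, mul_smul, Units.smul_def]
    _ = (g * a * ↑g⁻¹ : E) • g • z := by rw [← mul_assoc, mul_smul _ (g : E), Units.smul_def]

theorem exists_units_commute_smul_eq [FaithfulSMul E X] {S : Set E}
    (hS : ∀ a ∈ S, ∀ b ∈ S, a * b = b * a) {x y : X} (hx : orbit (adjoin R S) x = Set.univ)
    (hxy : x ∈ orbit (adjoin R S) y) :
    ∃ u : Eˣ, (∀ s ∈ S, Commute (u : E) s) ∧ u • x = y := by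
  have : IsMulCommutative (adjoin R S) := isMulCommutative_adjoin R hS
  obtain ⟨u, hu⟩ := exists_units_smul_eq_of_orbit_eq_univ hx hxy
  exact ⟨Units.map ((adjoin R S).val : adjoin R S →* E) u,
    fun s hs ↦ congrArg Subtype.val (mul_comm' (u : adjoin R S) ⟨s, subset_adjoin hs⟩), hu⟩

theorem stmt13_general [FaithfulSMul E X] {S : Set E} (hS : ∀ a ∈ S, ∀ b ∈ S, a * b = b * a)
    {x x' : X} (hx : orbit (adjoin R S) x = Set.univ) (g : Eˣ)
    (hx' : orbit (adjoin R ((fun a : E ↦ ↑g * a * ↑g⁻¹) '' S)) x' = Set.univ) :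
    ∃ h : Eˣ, (∀ s ∈ S, h * s * ↑h⁻¹ = g * s * ↑g⁻¹) ∧ h • x = x' := by
  have cyclic_inv_smul : orbit (adjoin R S) (g⁻¹ • x') = Set.univ := by
    rwa [← Set.smul_set_eq_univ (a := g), smul_orbit_adjoin, smul_inv_smul]
  obtain ⟨u, u_comm, hux⟩ :=
    exists_units_commute_smul_eq hS hx (cyclic_inv_smul ▸ Set.mem_univ x)
  refine ⟨g * u, fun s hs ↦ ?_, by rw [mul_smul, hux, smul_inv_smul]⟩
  calc ↑(g * u) * s * ↑(g * u)⁻¹ = g * (u * s * ↑u⁻¹) * ↑g⁻¹ := by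
        simp only [_root_.mul_inv_rev, Units.val_mul, mul_assoc]
    _ = g * s * ↑g⁻¹ := by rw [(u_comm s hs).eq, Units.mul_inv_cancel_right]

end Algebra

instance {n R : Type*} [Fintype n] [DecidableEq n] [Semiring R] :
    FaithfulSMul (Matrix n n R) (n → R) :=
  ⟨ext_iff_smul.mpr⟩

theorem cyclicVec_iff_orbit_adjoin_eq_univ {r : ℕ} {m₁ m₂ : Matrix (Fin r) (Fin r) ℂ}
    {v : Fin r → ℂ} :
    CyclicVec r m₁ m₂ v ↔ orbit (adjoin ℂ {m₁, m₂}) v = Set.univ := by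
  simp [CyclicVec, Set.eq_univ_iff_forall, mem_orbit_iff, Subalgebra.smul_def]

/-- If two commuting pairs with cyclic vectors are conjugate as pairs, then the triples
(including the cyclic vectors) are conjugate: some `h ∈ GL r ℂ` conjugates the pair and
carries `v` to `v′`.  Hence the forgetful map is a bijection from orbits of triples with
cyclic vector onto orbits of commuting pairs admitting a cyclic vector. -/
theorem stmt13 (r : ℕ) (hr : 1 ≤ r) (m₁ m₂ m₁' m₂' : Matrix (Fin r) (Fin r) ℂ)
    (hcomm : m₁ * m₂ = m₂ * m₁) (hcomm' : m₁' * m₂' = m₂' * m₁')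
    (v v' : Fin r → ℂ) (hv : CyclicVec r m₁ m₂ v) (hv' : CyclicVec r m₁' m₂' v')
    (g : GL (Fin r) ℂ) (hg₁ : g.val * m₁ * g⁻¹.val = m₁') (hg₂ : g.val * m₂ * g⁻¹.val = m₂') :
    ∃ h : GL (Fin r) ℂ, h.val * m₁ * h⁻¹.val = m₁' ∧ h.val * m₂ * h⁻¹.val = m₂' ∧
      Matrix.mulVec h.val v = v' := by
  subst hg₁ hg₂
  rw [cyclicVec_iff_orbit_adjoin_eq_univ] at hv hv'
  simpa [and_assoc, Units.smul_def] using
    stmt13_general (by simp [hcomm]) hv g (by rwa [Set.image_pair])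
end

section
/- Let r ≥ 1, let (m₁, m₂) be a commuting pair of r×r complex matrices and let v ∈ ℂʳ be cyclic for (m₁, m₂). Then the set {g.mulVec v : g ∈ GL_r(ℂ), g m₁ = m₁ g, g m₂ = m₂ g} — the orbit of v under the invertible elements of the commutant of {m₁, m₂} — is an open and dense subset of ℂʳ. -/
open Matrix

/-!
Evaluation at a cyclic vector `v` is a linear isomorphism from the commutant of `{m₁, m₂}` onto
`ℂʳ`: it is surjective because the commutative algebra generated by `m₁` and `m₂` lies in the
commutant, and injective because an element of the commutant is determined on every `a v` with
`a` in that algebra by its value on `v`. Through the inverse isomorphism `L` the orbit becomes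
`{w | det (L w) ≠ 0}`, which is open. It is dense because `L v = 1`, so that `det (L (w + t v))`
is a nonzero polynomial in `t`, whose finitely many roots can be avoided as `t → 0`.
-/

section CommRing

variable {n R : Type*} [Fintype n] [DecidableEq n] [CommRing R]
  {S : Set (Matrix n n R)} {v : n → R}

/-- `v` is a cyclic vector for the set of matrices `S`: the unital subalgebra generated by `S`
carries `v` to every vector. For a pair of matrices this is `CyclicVec`. -/
def IsCyclicVector (S : Set (Matrix n n R)) (v : n → R) : Prop :=
  ∀ w, ∃ a ∈ Algebra.adjoin R S, a *ᵥ v = w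

/-- The orbit of `v` under the group of invertible elements of the commutant of `S`. -/
def centralizerOrbit (S : Set (Matrix n n R)) (v : n → R) : Set (n → R) :=
  {w | ∃ g : GL n R, g.val ∈ Subalgebra.centralizer R S ∧ g.val *ᵥ v = w}

theorem IsCyclicVector.injOn_mulVec (hv : IsCyclicVector S v) :
    Set.InjOn (· *ᵥ v) (Subalgebra.centralizer R S : Set (Matrix n n R)) := by
  have mulVec_mulVec_comm {g a : Matrix n n R} (hg : g ∈ Subalgebra.centralizer R S)
      (ha : a ∈ Algebra.adjoin R S) : g *ᵥ (a *ᵥ v) = a *ᵥ (g *ᵥ v) := by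
    have hga : g * a = a * g := Algebra.adjoin_le_centralizer_centralizer R S ha g hg
    rw [mulVec_mulVec, hga, mulVec_mulVec]
  intro g hg h hh (hgh : g *ᵥ v = h *ᵥ v)
  refine mulVec_injective (funext fun w => ?_)
  obtain ⟨a, ha, rfl⟩ := hv w
  rw [mulVec_mulVec_comm hg ha, mulVec_mulVec_comm hh ha, hgh]

theorem IsCyclicVector.exists_mem_centralizer_mulVec_eq (hv : IsCyclicVector S v)
    (hS : S ⊆ S.centralizer) (w : n → R) : ∃ a ∈ Subalgebra.centralizer R S, a *ᵥ v = w := by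
  have adjoin_le : Algebra.adjoin R S ≤ Subalgebra.centralizer R S := Algebra.adjoin_le hS
  obtain ⟨a, ha, haw⟩ := hv w
  exact ⟨a, adjoin_le ha, haw⟩

/-- Evaluation at a cyclic vector `v` of the commuting set `S`, as a linear isomorphism from the
commutant of `S` onto the space of vectors. -/
noncomputable def IsCyclicVector.centralizerEquiv (hv : IsCyclicVector S v)
    (hS : S ⊆ S.centralizer) : Subalgebra.centralizer R S ≃ₗ[R] (n → R) :=
  LinearEquiv.ofBijective
    ((mulVecBilin R R).flip v ∘ₗ (Subalgebra.centralizer R S).val.toLinearMap)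
    ⟨fun g h hgh => Subtype.ext (hv.injOn_mulVec g.2 h.2 hgh), fun w =>
      let ⟨a, ha, haw⟩ := hv.exists_mem_centralizer_mulVec_eq hS w
      ⟨⟨a, ha⟩, haw⟩⟩

/-- The linear section of evaluation at a cyclic vector `v`: it sends `w` to the unique matrix in
the commutant of `S` that carries `v` to `w`. -/
noncomputable def IsCyclicVector.toCentralizer (hv : IsCyclicVector S v)
    (hS : S ⊆ S.centralizer) : (n → R) →ₗ[R] Matrix n n R :=
  (Subalgebra.centralizer R S).val.toLinearMap ∘ₗ (hv.centralizerEquiv hS).symm.toLinearMap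

theorem IsCyclicVector.toCentralizer_mem (hv : IsCyclicVector S v) (hS : S ⊆ S.centralizer)
    (w : n → R) : hv.toCentralizer hS w ∈ Subalgebra.centralizer R S :=
  ((hv.centralizerEquiv hS).symm w).2

theorem IsCyclicVector.toCentralizer_mulVec (hv : IsCyclicVector S v) (hS : S ⊆ S.centralizer)
    (w : n → R) : hv.toCentralizer hS w *ᵥ v = w :=
  (hv.centralizerEquiv hS).apply_symm_apply w

theorem IsCyclicVector.toCentralizer_apply_mulVec (hv : IsCyclicVector S v)
    (hS : S ⊆ S.centralizer) {g : Matrix n n R} (hg : g ∈ Subalgebra.centralizer R S) :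
    hv.toCentralizer hS (g *ᵥ v) = g :=
  congrArg Subtype.val ((hv.centralizerEquiv hS).symm_apply_apply ⟨g, hg⟩)

theorem IsCyclicVector.centralizerOrbit_eq (hv : IsCyclicVector S v) (hS : S ⊆ S.centralizer) :
    centralizerOrbit S v = {w | IsUnit (hv.toCentralizer hS w).det} := by
  ext w
  constructor
  · rintro ⟨g, hg, rfl⟩
    change IsUnit (hv.toCentralizer hS (g.val *ᵥ v)).det
    rw [hv.toCentralizer_apply_mulVec hS hg]
    exact (isUnit_iff_isUnit_det _).1 g.isUnit
  · intro hw
    exact ⟨GeneralLinearGroup.mk'' _ hw, hv.toCentralizer_mem hS w, hv.toCentralizer_mulVec hS w⟩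

open scoped Topology Polynomial

theorem finite_setOf_det_add_smul_eq_zero [IsDomain R] (A : Matrix n n R) {B : Matrix n n R}
    (hB : B.det ≠ 0) : {t : R | (A + t • B).det = 0}.Finite := by
  let p : R[X] := det ((Polynomial.X : R[X]) • B.map Polynomial.C + A.map Polynomial.C)
  have p_ne_zero : p ≠ 0 := fun hp => hB <| by
    rw [← Polynomial.coeff_det_X_add_C_card B A]
    exact congrArg (Polynomial.coeff · (Fintype.card n)) hp
  have eval_p (t : R) : p.eval t = (A + t • B).det := by
    rw [← Polynomial.coe_evalRingHom, RingHom.map_det]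
    congr 1
    ext i j
    simp [add_comm, mul_comm t]
  simpa only [Polynomial.IsRoot.def, eval_p] using Polynomial.finite_setOfPred_isRoot p_ne_zero

theorem dense_setOf_det_ne_zero [IsDomain R] [TopologicalSpace R] [T1Space R]
    [(𝓝[≠] (0 : R)).NeBot] {E : Type*} [AddCommMonoid E] [Module R E] [TopologicalSpace E]
    [ContinuousAdd E] [ContinuousSMul R E] (L : E →ₗ[R] Matrix n n R) {u : E}
    (hu : (L u).det ≠ 0) : Dense {w | (L w).det ≠ 0} := by
  intro w
  have line_tendsto : Filter.Tendsto (fun t : R => w + t • u) (𝓝[≠] 0) (𝓝 w) := by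
    have line_continuous : Continuous fun t : R => w + t • u := by fun_prop
    simpa only [zero_smul, add_zero] using line_continuous.continuousWithinAt.tendsto (x := 0)
  have eventually_det_ne_zero : ∀ᶠ t : R in 𝓝[≠] 0, (L w + t • L u).det ≠ 0 :=
    nhdsNE_le_cofinite 0 (finite_setOf_det_add_smul_eq_zero (L w) hu).compl_mem_cofinite
  refine mem_closure_of_tendsto line_tendsto (eventually_det_ne_zero.mono fun t ht => ?_)
  simpa only [Set.mem_ofPred_eq, map_add, map_smul] using ht

end CommRing

open scoped Topology in
theorem stmt14_general {n K : Type*} [Fintype n] [DecidableEq n] [Field K] [TopologicalSpace K]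
    [T1Space K] [IsTopologicalRing K] [(𝓝[≠] (0 : K)).NeBot]
    {S : Set (Matrix n n K)} (hS : S ⊆ S.centralizer) {v : n → K} (hv : IsCyclicVector S v) :
    IsOpen (centralizerOrbit S v) ∧ Dense (centralizerOrbit S v) := by
  simp only [hv.centralizerOrbit_eq hS, isUnit_iff_ne_zero]
  have toCentralizer_self : hv.toCentralizer hS v = 1 := by
    simpa only [one_mulVec] using hv.toCentralizer_apply_mulVec hS (one_mem _)
  refine ⟨isOpen_compl_singleton.preimage (hv.toCentralizer hS).continuous_on_pi.matrix_det,
    dense_setOf_det_ne_zero (hv.toCentralizer hS) (u := v) ?_⟩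
  simp [toCentralizer_self]

theorem pair_subset_centralizer {M : Type*} [Mul M] {a b : M} (h : a * b = b * a) :
    ({a, b} : Set M) ⊆ Set.centralizer {a, b} := by
  simp [Set.insert_subset_iff, Set.mem_centralizer_iff, h]

theorem centralizerOrbit_pair {n R : Type*} [Fintype n] [DecidableEq n] [CommRing R]
    (a b : Matrix n n R) (v : n → R) :
    centralizerOrbit {a, b} v =
      {w | ∃ g : GL n R, g.val * a = a * g.val ∧ g.val * b = b * g.val ∧ g.val *ᵥ v = w} := by
  simp [centralizerOrbit, Subalgebra.mem_centralizer_iff, eq_comm (a := a * _),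
    eq_comm (a := b * _), and_assoc]

/-- For a commuting pair `(m₁, m₂)` with cyclic vector `v`, the orbit of `v` under the
invertible elements of the commutant of `{m₁, m₂}` is open and dense in `ℂʳ`. -/
theorem stmt14 (r : ℕ) (hr : 1 ≤ r) (m₁ m₂ : Matrix (Fin r) (Fin r) ℂ)
    (hcomm : m₁ * m₂ = m₂ * m₁) (v : Fin r → ℂ) (hv : CyclicVec r m₁ m₂ v) :
    IsOpen {w : Fin r → ℂ | ∃ g : GL (Fin r) ℂ,
        g.val * m₁ = m₁ * g.val ∧ g.val * m₂ = m₂ * g.val ∧ Matrix.mulVec g.val v = w} ∧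
      Dense {w : Fin r → ℂ | ∃ g : GL (Fin r) ℂ,
        g.val * m₁ = m₁ * g.val ∧ g.val * m₂ = m₂ * g.val ∧ Matrix.mulVec g.val v = w} := by
  rw [← centralizerOrbit_pair]
  exact stmt14_general (pair_subset_centralizer hcomm) (Set.eq_univ_iff_forall.mp hv)
end

section
/- Let A and B be commutative rings, let B → B′ be a faithfully flat homomorphism of commutative rings (B′ a faithfully flat B-algebra), and let M be a module carrying commuting A-module and B-module structures (i.e. an A-module and a B-module with SMulCommClass A B M), so that the base change M ⊗_B B′ carries an induced A-module structure. Then M is flat as an A-module if and only if M ⊗_B B′ is flat as an A-module. -/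
open scoped TensorProduct

/-!
A module with commuting actions of `A` and `B` is a module over `A ⊗[ℤ] B`, so both actions are
restrictions along algebra maps `A → A ⊗[ℤ] B ← B`. For such a module `M` the two right factors of
`(M ⊗[B] N) ⊗[A] P` can be exchanged naturally in `P`, which identifies tensoring an `A`-linear map
`f` with `M ⊗[B] N` with first tensoring it with `M` over `A` and then with `N` over `B`. A
faithfully flat `N` makes the second step preserve and reflect injectivity; take for `f` the
inclusions of ideals of `A`.
-/

open Function TensorProduct.AlgebraTensorModule

section Heterobasic

variable {A B P Q : Type*} (C M N : Type*) [CommSemiring A] [CommSemiring B] [Semiring C]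
  [Algebra A C] [Algebra B C] [AddCommMonoid M] [Module A M] [Module B M] [Module C M]
  [IsScalarTower A C M] [IsScalarTower B C M] [SMulCommClass A B M] [SMulCommClass B A M]
  [AddCommMonoid N] [Module B N] [AddCommMonoid P] [Module A P] [AddCommMonoid Q] [Module A Q]
  (f : P →ₗ[A] Q)

theorem rightComm_comp_lTensor :
    (rightComm A B C M N Q).toLinearMap ∘ₗ lTensor C (M ⊗[B] N) f =
      rTensor B N (lTensor C M f) ∘ₗ (rightComm A B C M N P).toLinearMap := by
  ext
  simp

theorem lTensor_tensorProduct_injective_iff_rTensor_lTensor_injective :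
    Injective (f.lTensor (M ⊗[B] N)) ↔
      Injective (((lTensor C M f).restrictScalars B).rTensor N) := by
  have comm_comp : rightComm A B C M N Q ∘ f.lTensor (M ⊗[B] N) =
      ((lTensor C M f).restrictScalars B).rTensor N ∘ rightComm A B C M N P :=
    congrArg DFunLike.coe (rightComm_comp_lTensor C M N f)
  rw [← EquivLike.comp_injective _ (rightComm A B C M N Q), comm_comp, EquivLike.injective_comp]

end Heterobasic

section IsScalarTower

attribute [local instance] Algebra.TensorProduct.rightAlgebra TensorProduct.Algebra.module

variable (R A B M : Type*) [CommSemiring R] [AddCommMonoid M] [Module R M]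

theorem isScalarTower_tensorProduct_left [CommSemiring A] [Semiring B] [Algebra R A] [Algebra R B]
    [Module A M] [Module B M] [IsScalarTower R A M] [IsScalarTower R B M] [SMulCommClass A B M] :
    IsScalarTower A (A ⊗[R] B) M :=
  .of_algebraMap_smul fun a m ↦ by
    rw [Algebra.TensorProduct.algebraMap_apply, TensorProduct.Algebra.smul_def, one_smul,
      Algebra.algebraMap_self_apply]

theorem isScalarTower_tensorProduct_right [Semiring A] [CommSemiring B] [Algebra R A] [Algebra R B]
    [Module A M] [Module B M] [IsScalarTower R A M] [IsScalarTower R B M] [SMulCommClass A B M] :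
    IsScalarTower B (A ⊗[R] B) M :=
  .of_algebraMap_smul fun b m ↦ by
    rw [Algebra.TensorProduct.right_algebraMap_apply, TensorProduct.Algebra.smul_def, one_smul]

end IsScalarTower

theorem lTensor_tensorProduct_injective_iff {A B M N P Q : Type*} [CommRing A] [CommRing B]
    [AddCommGroup M] [Module A M] [Module B M] [SMulCommClass A B M] [SMulCommClass B A M]
    [AddCommGroup N] [Module B N] [Module.FaithfullyFlat B N]
    [AddCommGroup P] [Module A P] [AddCommGroup Q] [Module A Q] (f : P →ₗ[A] Q) :
    Injective (f.lTensor (M ⊗[B] N)) ↔ Injective (f.lTensor M) := by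
  let _ : Algebra B (A ⊗[ℤ] B) := Algebra.TensorProduct.rightAlgebra
  let _ : Module (A ⊗[ℤ] B) M := TensorProduct.Algebra.module
  have := isScalarTower_tensorProduct_left ℤ A B M
  have := isScalarTower_tensorProduct_right ℤ A B M
  let g : M ⊗[A] P →ₗ[B] M ⊗[A] Q := (lTensor (A ⊗[ℤ] B) M f).restrictScalars B
  calc Injective (f.lTensor (M ⊗[B] N))
    _ ↔ Injective (g.rTensor N) :=
      lTensor_tensorProduct_injective_iff_rTensor_lTensor_injective (A ⊗[ℤ] B) M N f
    _ ↔ Injective (g.lTensor N) := (LinearMap.lTensor_inj_iff_rTensor_inj N g).symm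
    _ ↔ Injective g := Module.FaithfullyFlat.lTensor_injective_iff_injective B N g

theorem stmt18_general (A B M N : Type*) [CommRing A] [CommRing B]
    [AddCommGroup M] [Module A M] [Module B M] [SMulCommClass A B M] [SMulCommClass B A M]
    [AddCommGroup N] [Module B N] [Module.FaithfullyFlat B N] :
    Module.Flat A M ↔ Module.Flat A (M ⊗[B] N) := by
  simp only [Module.Flat.iff_lTensor_injective', lTensor_tensorProduct_injective_iff]

/-- Faithfully flat descent of flatness, affine-local form of the paper's Lemma 1.5:
for a module `M` with commuting `A`- and `B`-module structures and a faithfully flat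
`B`-algebra `B′`, `M` is `A`-flat iff the base change `M ⊗[B] B′` is `A`-flat. -/
theorem stmt18 (A B B' M : Type*) [CommRing A] [CommRing B] [CommRing B']
    [Algebra B B'] [Module.FaithfullyFlat B B']
    [AddCommGroup M] [Module A M] [Module B M]
    [SMulCommClass A B M] [SMulCommClass B A M] :
    Module.Flat A M ↔ Module.Flat A (M ⊗[B] B') :=
  stmt18_general A B M B'
end
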